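/- In the model y = β |ξ + a| + e, x = ξ + δ, with ξ, e, δ independent, ξ and δ Gaussian, E e = E δ = 0, σ_ξ² > 0, σ_δ² > 0, the best predictor is E[y | x] = β σ_δ √K · F(k_x x + b_x), where F(a) = 2 φ(a) + a(2Φ(a) − 1), K = σ_ξ²/σ_x², k_x = √K/σ_δ, b_x = (a + (1 − K)μ)/(σ_δ √K), and μ = E x. -/

import Mathlib

open MeasureTheory ProbabilityTheory Real
open scoped NNReal

noncomputable section

/-- Standard normal pdf. -/
def stdNormalPDF (a : ℝ) : ℝ := (Real.sqrt (2 * Real.pi))⁻¹ * Real.exp (-(a ^ 2) / 2)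

/-- Standard normal cdf. -/
def stdNormalCDF (a : ℝ) : ℝ := ((gaussianReal 0 1) (Set.Iic a)).toReal

/-- `F(a) = E|γ₀ + a| = 2 φ(a) + a (2 Φ(a) − 1)`. -/
def absF (a : ℝ) : ℝ := 2 * stdNormalPDF a + a * (2 * stdNormalCDF a - 1)

/-!
For jointly Gaussian `(X, Y)`, the regression residual `Y - c X` with `c = cov(X, Y) / Var X` is
uncorrelated with `X`, hence independent of it. So, given `X`, `Y` is the constant `c X` plus an
independent Gaussian, i.e. Gaussian with mean `E Y + c (X - E X)` and variance
`Var Y - c cov(X, Y)`. With `X = x` and `Y = ξ` the slope is `c = K`, and given `x` the variable `ξ`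
has law `N(K x + (1 - K) μ, σδ² K)`. The mean absolute value of a Gaussian is expressed by `F`
through rescaling to `N(0, 1)`, where `t φ(t) = -φ'(t)` evaluates the truncated first moment. The
error `e` is centred and independent of `x`, so it contributes nothing.
-/

section StandardNormal

open Filter Topology

lemma gaussianPDFReal_zero_one (x : ℝ) : gaussianPDFReal 0 1 x = stdNormalPDF x := by
  simp [gaussianPDFReal, stdNormalPDF]

lemma hasDerivAt_stdNormalPDF (x : ℝ) : HasDerivAt stdNormalPDF (-(x * stdNormalPDF x)) x := by
  have hexponent : HasDerivAt (fun t : ℝ ↦ -(t ^ 2) / 2) (-x) x :=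
    ((hasDerivAt_pow 2 x).neg.div_const 2).congr_deriv (by push_cast; ring)
  exact (hexponent.exp.const_mul _).congr_deriv (by simp only [stdNormalPDF]; ring)

lemma tendsto_stdNormalPDF_atBot : Tendsto stdNormalPDF atBot (𝓝 0) := by
  have hsq : Tendsto (fun t : ℝ ↦ t ^ 2) atBot atTop := by
    simpa only [id, sq] using tendsto_id.atBot_mul_atBot₀ (tendsto_id (α := ℝ))
  have hexponent : Tendsto (fun t : ℝ ↦ -(t ^ 2) / 2) atBot atBot :=
    (tendsto_neg_atTop_atBot.comp hsq).atBot_div_const two_pos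
  have hmul := (Real.tendsto_exp_atBot.comp hexponent).const_mul (√(2 * π))⁻¹
  rwa [mul_zero] at hmul

lemma integrable_mul_stdNormalPDF : Integrable fun x ↦ x * stdNormalPDF x := by
  refine ((integrable_mul_exp_neg_mul_sq one_half_pos).const_mul (√(2 * π))⁻¹).congr
    (ae_of_all _ fun x ↦ ?_)
  simp only [stdNormalPDF, show -(x ^ 2) / 2 = -(1 / 2) * x ^ 2 by ring]
  ring

lemma integrable_id_gaussianReal (m : ℝ) (v : ℝ≥0) : Integrable (fun x ↦ x) (gaussianReal m v) :=
  (memLp_id_gaussianReal 1).integrable le_rfl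

lemma setIntegral_Iic_id_gaussianReal_zero_one (u : ℝ) :
    ∫ x in Set.Iic u, x ∂gaussianReal 0 1 = -stdNormalPDF u := by
  calc ∫ x in Set.Iic u, x ∂gaussianReal 0 1
      = ∫ x in Set.Iic u, x * stdNormalPDF x := by
        rw [← integral_indicator measurableSet_Iic,
          integral_gaussianReal_eq_integral_smul one_ne_zero,
          ← integral_indicator measurableSet_Iic]
        congr with x
        by_cases hx : x ∈ Set.Iic u <;> simp [hx, gaussianPDFReal_zero_one, mul_comm]
    _ = -stdNormalPDF u - -0 :=
        integral_Iic_of_hasDerivAt_of_tendsto'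
          (fun x _ ↦ (hasDerivAt_stdNormalPDF x).neg.congr_deriv (neg_neg _))
          integrable_mul_stdNormalPDF.integrableOn tendsto_stdNormalPDF_atBot.neg
    _ = -stdNormalPDF u := by simp

lemma integral_abs_sub_gaussianReal_zero_one (u : ℝ) :
    ∫ x, |u - x| ∂gaussianReal 0 1 = absF u := by
  have hid := integrable_id_gaussianReal 0 1
  have hsub : Integrable (fun x ↦ u - x) (gaussianReal 0 1) := (integrable_const u).sub hid
  have habs (x : ℝ) : |u - x| = 2 * (Set.Iic u).indicator (fun t ↦ u - t) x - (u - x) := by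
    rcases le_or_gt x u with hxu | hxu
    · rw [Set.indicator_of_mem (Set.mem_Iic.mpr hxu), abs_of_nonneg (sub_nonneg.mpr hxu)]
      ring
    · rw [Set.indicator_of_notMem (Set.notMem_Iic.mpr hxu), abs_of_neg (sub_neg.mpr hxu)]
      ring
  have hlower : ∫ x in Set.Iic u, (u - x) ∂gaussianReal 0 1
      = u * stdNormalCDF u + stdNormalPDF u := by
    rw [integral_sub (integrable_const u) hid.integrableOn,
      setIntegral_Iic_id_gaussianReal_zero_one, setIntegral_const, sub_neg_eq_add, smul_eq_mul,
      mul_comm]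
    rfl
  have hmean : ∫ x, (u - x) ∂gaussianReal 0 1 = u := by
    rw [integral_sub (integrable_const u) hid, integral_id_gaussianReal]
    simp
  simp_rw [habs]
  rw [integral_sub ((hsub.indicator measurableSet_Iic).const_mul 2) hsub, integral_const_mul,
    integral_indicator measurableSet_Iic, hlower, hmean, absF]
  ring

end StandardNormal

lemma gaussianReal_zero_one_map_sub_sqrt_mul (m : ℝ) (v : ℝ≥0) :
    (gaussianReal 0 1).map (fun z ↦ m - √v * z) = gaussianReal m v := by
  rw [show (fun z ↦ m - √v * z) = (fun t ↦ m - t) ∘ (√v * ·) from rfl,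
    ← Measure.map_map (by fun_prop) (by fun_prop), gaussianReal_map_const_mul,
    gaussianReal_map_const_sub]
  congr 1
  · simp
  · ext
    simp

lemma integral_abs_add_gaussianReal (m a : ℝ) {v : ℝ≥0} (hv : v ≠ 0) :
    ∫ z, |z + a| ∂gaussianReal m v = √v * absF ((m + a) / √v) := by
  have hsd : 0 < √(v : ℝ) := by positivity
  have hscale (z : ℝ) : |m - √v * z + a| = √v * |(m + a) / √v - z| := by
    rw [← abs_of_pos hsd, ← abs_mul, abs_of_pos hsd]
    congr 1
    field_simp
    ring
  rw [← gaussianReal_zero_one_map_sub_sqrt_mul, integral_map (by fun_prop) (by fun_prop)]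
  simp_rw [hscale]
  rw [integral_const_mul, integral_abs_sub_gaussianReal_zero_one]

section Independence

variable {Ω α β γ E : Type*} {mΩ : MeasurableSpace Ω} {mα : MeasurableSpace α}
  {mβ : MeasurableSpace β} {mγ : MeasurableSpace γ} {P : Measure Ω} [IsProbabilityMeasure P]

lemma condDistrib_ae_eq_const_of_indepFun [StandardBorelSpace β] [Nonempty β]
    {X : Ω → α} {Y : Ω → β} (hX : AEMeasurable X P) (hY : AEMeasurable Y P)
    (hXY : IndepFun X Y P) :
    condDistrib Y X P =ᵐ[P.map X] Kernel.const α (P.map Y) := by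
  have := Measure.isProbabilityMeasure_map hY
  refine condDistrib_ae_eq_of_measure_eq_compProd _ hY ?_
  rw [Measure.compProd_const, hXY.map_prod_eq_prod_map_map hX hY]

lemma condExp_prod_ae_eq_integral_of_indepFun [StandardBorelSpace β] [Nonempty β]
    [NormedAddCommGroup E] [NormedSpace ℝ E] [CompleteSpace E]
    {X : Ω → α} {Y : Ω → β} (hX : Measurable X) (hY : AEMeasurable Y P) (hXY : IndepFun X Y P)
    {f : α × β → E} (hf : StronglyMeasurable f) (hfint : Integrable (fun ω ↦ f (X ω, Y ω)) P) :
    P[fun ω ↦ f (X ω, Y ω) | mα.comap X] =ᵐ[P] fun ω ↦ ∫ y, f (X ω, y) ∂P.map Y := by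
  filter_upwards [condExp_prod_ae_eq_integral_condDistrib hX hY hf hfint,
    ae_of_ae_map hX.aemeasurable
      (condDistrib_ae_eq_const_of_indepFun hX.aemeasurable hY hXY)] with ω hcond hconst
  rw [hcond, hconst, Kernel.const_apply]

lemma condExp_smul_add_ae_eq_of_indepFun [NormedAddCommGroup E] [NormedSpace ℝ E]
    [CompleteSpace E] [MeasurableSpace E] [BorelSpace E] [SecondCountableTopology E]
    {X : Ω → α} {U V : Ω → E} (hX : Measurable X) (hV : Measurable V) (hXV : IndepFun X V P)
    (hU_int : Integrable U P) (hV_int : Integrable V P) (c : ℝ) :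
    P[c • U + V | mα.comap X] =ᵐ[P] fun ω ↦ c • (P[U | mα.comap X]) ω + P[V] := by
  have hV_cond : P[V | mα.comap X] =ᵐ[P] fun _ ↦ P[V] :=
    condExp_indep_eq hV.comap_le hX.comap_le (comap_measurable V).stronglyMeasurable hXV.symm
  filter_upwards [condExp_add (hU_int.smul c) hV_int (mα.comap X),
    condExp_smul c U (mα.comap X), hV_cond] with ω hω_add hω_smul hω_V
  rw [hω_add, Pi.add_apply, hω_smul, hω_V, Pi.smul_apply]

lemma indepFun_prodMk_left_of_indepFun_prodMk_right
    {X : Ω → α} {Y : Ω → β} {Z : Ω → γ} (hX : Measurable X) (hY : Measurable Y)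
    (hZ : Measurable Z) (hX_YZ : IndepFun X (fun ω ↦ (Y ω, Z ω)) P) (hYZ : IndepFun Y Z P) :
    IndepFun (fun ω ↦ (X ω, Y ω)) Z P := by
  have := Measure.isProbabilityMeasure_map (μ := P) hX.aemeasurable
  have := Measure.isProbabilityMeasure_map (μ := P) hY.aemeasurable
  have := Measure.isProbabilityMeasure_map (μ := P) hZ.aemeasurable
  have hXY : IndepFun X Y P := hX_YZ.comp measurable_id measurable_fst
  rw [indepFun_iff_map_prod_eq_prod_map_map (by fun_prop) (by fun_prop)]
  calc P.map (fun ω ↦ ((X ω, Y ω), Z ω))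
      = (P.map fun ω ↦ (X ω, (Y ω, Z ω))).map MeasurableEquiv.prodAssoc.symm := by
        rw [Measure.map_map (by fun_prop) (by fun_prop)]
        rfl
    _ = ((P.map X).prod ((P.map Y).prod (P.map Z))).map MeasurableEquiv.prodAssoc.symm := by
        rw [hX_YZ.map_prod_eq_prod_map_map (by fun_prop) (by fun_prop),
          hYZ.map_prod_eq_prod_map_map (by fun_prop) (by fun_prop)]
    _ = ((P.map X).prod (P.map Y)).prod (P.map Z) := by
        rw [← Measure.prodAssoc_prod, MeasurableEquiv.map_symm_map]
    _ = (P.map fun ω ↦ (X ω, Y ω)).prod (P.map Z) := by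
        rw [hXY.map_prod_eq_prod_map_map (by fun_prop) (by fun_prop)]

end Independence

section GaussianRegression

variable {Ω E : Type*} {mΩ : MeasurableSpace Ω} {P : Measure Ω} {X Y : Ω → ℝ} {c : ℝ}

lemma hasGaussianLaw_prodMk_sub_const_mul (hXY : HasGaussianLaw (fun ω ↦ (X ω, Y ω)) P) (c : ℝ) :
    HasGaussianLaw (fun ω ↦ (X ω, Y ω - c * X ω)) P :=
  hXY.map_fun ((ContinuousLinearMap.fst ℝ ℝ ℝ).prod
    (ContinuousLinearMap.snd ℝ ℝ ℝ - c • ContinuousLinearMap.fst ℝ ℝ ℝ))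

lemma indepFun_sub_const_mul_of_hasGaussianLaw (hXY : HasGaussianLaw (fun ω ↦ (X ω, Y ω)) P)
    (hc : cov[X, Y; P] = c * Var[X; P]) :
    IndepFun X (fun ω ↦ Y ω - c * X ω) P := by
  have := hXY.isProbabilityMeasure
  refine (hasGaussianLaw_prodMk_sub_const_mul hXY c).indepFun_of_covariance_eq_zero ?_
  rw [covariance_fun_sub_right hXY.fst.memLp_two hXY.snd.memLp_two
      (hXY.fst.memLp_two.const_mul c), covariance_const_mul_right,
    covariance_self hXY.fst.aemeasurable, hc, sub_self]

lemma variance_sub_const_mul_of_covariance_eq [IsFiniteMeasure P] (hX : MemLp X 2 P)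
    (hY : MemLp Y 2 P) (hc : cov[X, Y; P] = c * Var[X; P]) :
    Var[fun ω ↦ Y ω - c * X ω; P] = Var[Y; P] - c * cov[X, Y; P] := by
  rw [variance_fun_sub hY (hX.const_mul c), covariance_const_mul_right, variance_const_mul,
    covariance_comm, hc]
  ring

lemma map_sub_const_mul_of_hasGaussianLaw (hXY : HasGaussianLaw (fun ω ↦ (X ω, Y ω)) P)
    (hc : cov[X, Y; P] = c * Var[X; P]) :
    P.map (fun ω ↦ Y ω - c * X ω)
      = gaussianReal (P[Y] - c * P[X]) (Var[Y; P] - c * cov[X, Y; P]).toNNReal := by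
  have := hXY.isProbabilityMeasure
  rw [(hasGaussianLaw_prodMk_sub_const_mul hXY c).snd.map_eq_gaussianReal,
    variance_sub_const_mul_of_covariance_eq hXY.fst.memLp_two hXY.snd.memLp_two hc,
    integral_sub hXY.snd.integrable (hXY.fst.integrable.const_mul c), integral_const_mul]

variable [NormedAddCommGroup E] [NormedSpace ℝ E] [CompleteSpace E] {f : ℝ → E}

lemma condExp_comp_ae_eq_integral_gaussianReal
    (hXY : HasGaussianLaw (fun ω ↦ (X ω, Y ω)) P) (hX : Measurable X)
    (hc : cov[X, Y; P] = c * Var[X; P])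
    (hf : StronglyMeasurable f) (hfint : Integrable (fun ω ↦ f (Y ω)) P) :
    P[fun ω ↦ f (Y ω) | MeasurableSpace.comap X inferInstance] =ᵐ[P] fun ω ↦
      ∫ z, f z ∂gaussianReal (P[Y] + c * (X ω - P[X])) (Var[Y; P] - c * cov[X, Y; P]).toNNReal := by
  have := hXY.isProbabilityMeasure
  have hY_eq (ω : Ω) : c * X ω + (Y ω - c * X ω) = Y ω := by ring
  have hcond := condExp_prod_ae_eq_integral_of_indepFun hX
    (hasGaussianLaw_prodMk_sub_const_mul hXY c).snd.aemeasurable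
    (indepFun_sub_const_mul_of_hasGaussianLaw hXY hc)
    (f := fun p ↦ f (c * p.1 + p.2)) (hf.comp_measurable (by fun_prop))
    (by simpa only [hY_eq] using hfint)
  simp only [hY_eq, map_sub_const_mul_of_hasGaussianLaw hXY hc] at hcond
  filter_upwards [hcond] with ω hω
  rw [hω, ← integral_map (φ := fun r ↦ c * X ω + r) (by fun_prop) hf.aestronglyMeasurable,
    gaussianReal_map_const_add]
  ring_nf

end GaussianRegression

section GaussianSignalPlusNoise

variable {Ω E : Type*} {mΩ : MeasurableSpace Ω} {P : Measure Ω} {X Y : Ω → ℝ}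
  {m₁ m₂ : ℝ} {v₁ v₂ : ℝ≥0}

lemma integral_add_of_hasLaw_gaussianReal (hX : HasLaw X (gaussianReal m₁ v₁) P)
    (hY : HasLaw Y (gaussianReal m₂ v₂) P) : P[X + Y] = m₁ + m₂ := by
  rw [integral_add' hX.hasGaussianLaw.integrable hY.hasGaussianLaw.integrable, hX.integral_eq,
    hY.integral_eq, integral_id_gaussianReal, integral_id_gaussianReal]

lemma covariance_add_left_self_of_indepFun [IsFiniteMeasure P] (hX : MemLp X 2 P)
    (hY : MemLp Y 2 P) (hXY : IndepFun X Y P) : cov[X + Y, X; P] = Var[X; P] := by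
  rw [covariance_add_left hX hY hX, covariance_self hX.aemeasurable,
    hXY.symm.covariance_eq_zero hY hX, add_zero]

lemma hasGaussianLaw_prodMk_add_left_of_indepFun (hX : HasGaussianLaw X P)
    (hY : HasGaussianLaw Y P) (hXY : IndepFun X Y P) :
    HasGaussianLaw (fun ω ↦ ((X + Y) ω, X ω)) P :=
  (hXY.hasGaussianLaw hX hY).map_fun
    ((ContinuousLinearMap.fst ℝ ℝ ℝ + ContinuousLinearMap.snd ℝ ℝ ℝ).prod
      (ContinuousLinearMap.fst ℝ ℝ ℝ))

lemma condExp_comp_comap_add_ae_eq_integral_gaussianReal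
    [NormedAddCommGroup E] [NormedSpace ℝ E] [CompleteSpace E] {f : ℝ → E}
    (hX : HasLaw X (gaussianReal m₁ v₁) P) (hY : HasLaw Y (gaussianReal m₂ v₂) P)
    (hXY : IndepFun X Y P) (hadd : Measurable (X + Y))
    (hf : StronglyMeasurable f) (hfint : Integrable (fun ω ↦ f (X ω)) P) :
    P[fun ω ↦ f (X ω) | MeasurableSpace.comap (X + Y) inferInstance] =ᵐ[P] fun ω ↦
      ∫ z, f z ∂gaussianReal (m₁ + v₁ / (v₁ + v₂) * ((X + Y) ω - (m₁ + m₂)))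
        (v₁ / (v₁ + v₂) * v₂) := by
  have := hX.isProbabilityMeasure
  have hX_gauss := hX.hasGaussianLaw
  have hY_gauss := hY.hasGaussianLaw
  have hmeanX : P[X] = m₁ := hX.integral_eq.trans integral_id_gaussianReal
  have hvarX : Var[X; P] = v₁ := hX.variance_eq.trans variance_id_gaussianReal
  have hvarY : Var[Y; P] = v₂ := hY.variance_eq.trans variance_id_gaussianReal
  have hvar : Var[X + Y; P] = v₁ + v₂ := by
    rw [hXY.variance_add hX_gauss.memLp_two hY_gauss.memLp_two, hvarX, hvarY]
  have hcov : cov[X + Y, X; P] = v₁ := by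
    rw [covariance_add_left_self_of_indepFun hX_gauss.memLp_two hY_gauss.memLp_two hXY, hvarX]
  have hratio : (v₁ : ℝ) / (v₁ + v₂) * (v₁ + v₂) = v₁ :=
    div_mul_cancel_of_imp fun h ↦ ((add_eq_zero_iff_of_nonneg v₁.2 v₂.2).mp h).1
  have hvar_cond : ((v₁ : ℝ) - v₁ / (v₁ + v₂) * v₁).toNNReal = v₁ / (v₁ + v₂) * v₂ := by
    rw [show (v₁ : ℝ) - v₁ / (v₁ + v₂) * v₁ = v₁ / (v₁ + v₂) * v₂ by linear_combination -hratio]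
    exact_mod_cast Real.toNNReal_coe
  have hcond := condExp_comp_ae_eq_integral_gaussianReal
    (hasGaussianLaw_prodMk_add_left_of_indepFun hX_gauss hY_gauss hXY) hadd
    (c := v₁ / (v₁ + v₂)) (by rw [hcov, hvar, hratio]) hf hfint
  rwa [hmeanX, integral_add_of_hasLaw_gaussianReal hX hY, hvarX, hcov, hvar_cond] at hcond

lemma condExp_abs_add_const_comap_add_ae_eq_absF (a : ℝ)
    (hX : HasLaw X (gaussianReal m₁ v₁) P) (hY : HasLaw Y (gaussianReal m₂ v₂) P)
    (hXY : IndepFun X Y P) (hadd : Measurable (X + Y)) (hv₁ : v₁ ≠ 0) (hv₂ : v₂ ≠ 0) :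
    P[fun ω ↦ |X ω + a| | MeasurableSpace.comap (X + Y) inferInstance] =ᵐ[P] fun ω ↦
      √(v₁ / (v₁ + v₂) * v₂) * absF
        ((m₁ + v₁ / (v₁ + v₂) * ((X + Y) ω - (m₁ + m₂)) + a) / √(v₁ / (v₁ + v₂) * v₂)) := by
  have := hX.isProbabilityMeasure
  have hint : Integrable (fun ω ↦ |X ω + a|) P :=
    (hX.hasGaussianLaw.integrable.add (integrable_const a)).abs
  have hcond := condExp_comp_comap_add_ae_eq_integral_gaussianReal hX hY hXY hadd
    (f := fun z ↦ |z + a|) (by fun_prop) hint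
  have hv : v₁ / (v₁ + v₂) * v₂ ≠ 0 := by positivity
  simpa only [integral_abs_add_gaussianReal _ a hv, NNReal.coe_mul, NNReal.coe_div,
    NNReal.coe_add] using hcond

end GaussianSignalPlusNoise

lemma regression_add_div_sqrt_mul {K : ℝ} (hK : 0 ≤ K) (v m x a : ℝ) :
    (m + K * (x - m) + a) / √(K * v) = √K / √v * x + (a + (1 - K) * m) / (√v * √K) := by
  have hslope : √K / √v = K / (√v * √K) := by rw [← div_div, div_right_comm, Real.div_sqrt]
  rw [Real.sqrt_mul hK, hslope]
  ring

/-- In the absolute-value EIV model `y = β|ξ + a| + e`, `x = ξ + δ`, with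
`ξ, e, δ` independent, `ξ, δ` Gaussian, `E e = E δ = 0`, `σξ² > 0`, `σδ² > 0`, the best
predictor is `E[y | x] = β σδ √K · F(k_x x + b_x)`, where `K = σξ²/σx²`, `k_x = √K/σδ`,
`b_x = (a + (1 − K)μ)/(σδ √K)`, `μ = E x`. -/
theorem stmt17 {Ω : Type*} [MeasurableSpace Ω] (P : Measure Ω) [IsProbabilityMeasure P]
    (ξ e δ x y : Ω → ℝ) (hξm : Measurable ξ) (hem : Measurable e) (hδm : Measurable δ)
    (β a : ℝ) (mξ : ℝ) (vξ vδ : ℝ≥0)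
    (hξ : Measure.map ξ P = gaussianReal mξ vξ)
    (hδ : Measure.map δ P = gaussianReal 0 vδ)
    (hindep : ProbabilityTheory.IndepFun ξ (fun ω => (e ω, δ ω)) P)
    (hindep' : ProbabilityTheory.IndepFun e δ P)
    (he0 : ∫ ω, e ω ∂P = 0) (heInt : Integrable e P)
    (hvξ : (0 : ℝ≥0) < vξ) (hvδ : (0 : ℝ≥0) < vδ)
    (hy : ∀ ω, y ω = β * |ξ ω + a| + e ω)
    (hx : ∀ ω, x ω = ξ ω + δ ω)
    (μ : ℝ) (hμ : μ = ∫ ω, x ω ∂P)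
    (K σδ : ℝ) (hK : K = (vξ : ℝ) / ((vξ : ℝ) + (vδ : ℝ))) (hσδ : σδ = Real.sqrt (vδ : ℝ)) :
    P[y | MeasurableSpace.comap x inferInstance]
      =ᵐ[P] fun ω =>
        β * σδ * Real.sqrt K
          * absF (Real.sqrt K / σδ * x ω + (a + (1 - K) * μ) / (σδ * Real.sqrt K)) := by
  obtain rfl : x = ξ + δ := funext hx
  obtain rfl : y = β • (fun ω ↦ |ξ ω + a|) + e := funext hy
  have hξ_law : HasLaw ξ (gaussianReal mξ vξ) P := ⟨hξm.aemeasurable, hξ⟩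
  have hδ_law : HasLaw δ (gaussianReal 0 vδ) P := ⟨hδm.aemeasurable, hδ⟩
  have hx_meas : Measurable (ξ + δ) := hξm.add hδm
  have hξδ : IndepFun ξ δ P := hindep.comp measurable_id measurable_snd
  have hxe : IndepFun (ξ + δ) e P :=
    (indepFun_prodMk_left_of_indepFun_prodMk_right hξm hδm hem
      (hindep.comp measurable_id measurable_swap) hindep'.symm).comp measurable_add measurable_id
  obtain rfl : μ = mξ := by
    rw [hμ, integral_add_of_hasLaw_gaussianReal hξ_law hδ_law, add_zero]
  have hK_nonneg : 0 ≤ K := by rw [hK]; positivity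
  have hsignal_int : Integrable (fun ω ↦ |ξ ω + a|) P :=
    (hξ_law.hasGaussianLaw.integrable.add (integrable_const a)).abs
  filter_upwards [condExp_smul_add_ae_eq_of_indepFun hx_meas hem hxe hsignal_int heInt β,
    condExp_abs_add_const_comap_add_ae_eq_absF a hξ_law hδ_law hξδ hx_meas hvξ.ne' hvδ.ne']
    with ω hdecomp hsignal
  rw [hdecomp, hsignal, he0, ← hK, add_zero, add_zero,
    regression_add_div_sqrt_mul hK_nonneg, Real.sqrt_mul hK_nonneg, ← hσδ, smul_eq_mul]
  ring
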